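/- Let J = J(a,b) and J₀ = J(a⁰,b⁰) be two-sided p-periodic Jacobi operators on ℓ²(ℤ). Then their spectra (as bounded operators on the complex Hilbert space ℓ²(ℤ)) coincide, σ(J) = σ(J₀), if and only if their discriminants coincide, Δ_{(a,b)} = Δ_{(a⁰,b⁰)} as polynomials. -/

import Mathlib

open scoped ComplexConjugate

noncomputable section

/-- The two-sided Hilbert space `ℓ²(ℤ)`. -/
abbrev HZ : Type := lp (fun _ : ℤ => ℂ) 2

/-- The transfer matrix `Λ_n(x) = (1/a_n)·[[x − b_n, −1], [a_n², 0]]`. -/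
def lamMat (a b : ℤ → ℝ) (n : ℤ) : Matrix (Fin 2) (Fin 2) (Polynomial ℝ) :=
  Polynomial.C (a n)⁻¹ • !![Polynomial.X - Polynomial.C (b n), -1;
    Polynomial.C ((a n) ^ 2), 0]

/-- The ordered product `Λ_n ⋯ Λ_2 Λ_1`. -/
def tMat (a b : ℤ → ℝ) : ℕ → Matrix (Fin 2) (Fin 2) (Polynomial ℝ)
  | 0 => 1
  | n + 1 => lamMat a b ((n : ℤ) + 1) * tMat a b n

/-- The discriminant `Δ_{(a,b)}(x) = Tr(Λ_p(x) ⋯ Λ_1(x))`. -/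
def disc (a b : ℤ → ℝ) (p : ℕ) : Polynomial ℝ := Matrix.trace (tMat a b p)

/-! The spectrum of a periodic Jacobi operator is `{z | Δ(z) ∈ [-2, 2]}`. Indeed, the transfer
matrix over one period has determinant `1`, so it adds up with its inverse to `Δ` times the
identity, that is, `Δ(z) U n = U (n + p) + U (n - p)` for every solution of the recurrence
`z U n = a (n - 1) U (n - 1) + b n U n + a n U (n + 1)`. The standard basis solves it with `J` in
place of `z`, hence `Δ(J)` is a sum of two shifts and has norm at most `2`; as `J` is
self-adjoint, this gives one inclusion. If conversely `Δ(z) ∈ [-2, 2]`, then `l + l⁻¹ = Δ(z)`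
for some `|l| = 1`, so there is a nonzero solution with periodic modulus, and its truncations
are approximate eigenvectors.

A real polynomial `P` of positive degree and leading coefficient can be recovered from its degree
and the set `{z | P(z) ∈ [-2, 2]}` if the latter is real. Indeed, if `P` and `Q` share these data,
then `(P² - 4)(Q² - 4)` has only real roots and is nonnegative on `ℝ`, so it is a square `W²`. The
product `(PQ - W)(PQ + W) = 4 (P² + Q² - 4)` has degree at most `2 deg P`, which is the degree of
the sum `2 PQ` of its factors, so one of these is a constant `k`. Comparing leading coefficients
shows `k ≥ 4`, evaluating at a zero of `P` shows `k ≤ 4`, and `k = 4` means `4 (P - Q)² = 0`. -/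

section Polynomial

open Polynomial

lemma sq_X_sub_C_dvd_of_eval_nonneg {F : ℝ[X]} {r : ℝ} (hF : ∀ x, 0 ≤ F.eval x)
    (hr : F.IsRoot r) : (X - C r) ^ 2 ∣ F := by
  have hmin : IsLocalMin (fun x ↦ F.eval x) r := .of_forall fun x ↦ hr.le.trans (hF x)
  have hderiv : F.derivative.eval r = 0 := by simpa using hmin.deriv_eq_zero
  obtain ⟨G, rfl⟩ := dvd_iff_isRoot.mpr hr
  have hG : G.IsRoot r := by simpa [derivative_mul] using hderiv
  rw [sq]
  exact mul_dvd_mul_left _ (dvd_iff_isRoot.mpr hG)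

lemma eval_nonneg_of_sq_X_sub_C_mul {G : ℝ[X]} {r : ℝ}
    (h : ∀ x, 0 ≤ ((X - C r) ^ 2 * G).eval x) (x : ℝ) : 0 ≤ G.eval x := by
  have hsub : ({r}ᶜ : Set ℝ) ⊆ {y | 0 ≤ G.eval y} := fun y (hy : y ≠ r) ↦ by
    have hpos : 0 < (y - r) ^ 2 := by have := sub_ne_zero.mpr hy; positivity
    exact nonneg_of_mul_nonneg_right (by simpa using h y) hpos
  have hclosed : IsClosed {y | 0 ≤ G.eval y} := isClosed_le continuous_const G.continuous
  exact hclosed.closure_subset_iff.mpr hsub (dense_compl_singleton r x)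

theorem isSquare_of_splits_of_eval_nonneg {F : ℝ[X]} (hF : F.Splits)
    (hnonneg : ∀ x, 0 ≤ F.eval x) : IsSquare F := by
  induction hn : F.natDegree using Nat.strong_induction_on generalizing F with
  | _ n ih =>
  rcases eq_or_ne F 0 with rfl | hF0
  · exact .zero
  by_cases hdeg : F.degree = 0
  · obtain ⟨c, rfl⟩ : ∃ c, F = C c := ⟨_, eq_C_of_degree_eq_zero hdeg⟩
    exact (Real.isSquare_iff.mpr (by simpa using hnonneg 0)).map C
  obtain ⟨r, hr⟩ := hF.exists_eval_eq_zero hdeg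
  obtain ⟨G, rfl⟩ := sq_X_sub_C_dvd_of_eval_nonneg hnonneg hr
  have hG0 : G ≠ 0 := right_ne_zero_of_mul hF0
  have hlt : G.natDegree < n := by
    rw [← hn, natDegree_mul (left_ne_zero_of_mul hF0) hG0, natDegree_pow, natDegree_X_sub_C]
    lia
  exact (IsSquare.sq _).mul <| ih _ hlt (hF.of_dvd hF0 (dvd_mul_left ..))
    (eval_nonneg_of_sq_X_sub_C_mul hnonneg) rfl

/-- The set of complex points at which the real polynomial `P` takes a real value in `[-r, r]`. -/
def bandPreimage (r : ℝ) (P : ℝ[X]) : Set ℂ := {z | ∃ t : ℝ, |t| ≤ r ∧ aeval z P = t}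

lemma aeval_ofReal_complex (P : ℝ[X]) (x : ℝ) : aeval (x : ℂ) P = (P.eval x : ℝ) := by
  simpa using aeval_algebraMap_apply ℂ x P

lemma ofReal_mem_bandPreimage {r x : ℝ} {P : ℝ[X]} :
    (x : ℂ) ∈ bandPreimage r P ↔ |P.eval x| ≤ r := by
  simp [bandPreimage, aeval_ofReal_complex]

lemma splits_sq_sub_sq_of_bandPreimage_subset {r : ℝ} (hr : 0 ≤ r) {P : ℝ[X]}
    (hP : bandPreimage r P ⊆ Set.range Complex.ofReal) : (P ^ 2 - C r ^ 2).Splits := by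
  refine Splits.of_splits_map (algebraMap ℝ ℂ) (IsAlgClosed.splits _) fun z hz ↦ hP ?_
  have hroot : (aeval z P - r) * (aeval z P + r) = 0 := by
    have := (mem_roots'.mp hz).2
    simp only [IsRoot.def, eval_map_algebraMap, map_sub, map_pow, aeval_C,
      Complex.coe_algebraMap] at this
    linear_combination this
  rcases mul_eq_zero.mp hroot with h | h
  · exact ⟨r, (abs_of_nonneg hr).le, sub_eq_zero.mp h⟩
  · exact ⟨-r, by rw [abs_neg, abs_of_nonneg hr], by simpa using eq_neg_of_add_eq_zero_left h⟩

lemma isSquare_mul_of_bandPreimage_eq {r : ℝ} (hr : 0 ≤ r) {P Q : ℝ[X]}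
    (hP : bandPreimage r P ⊆ Set.range Complex.ofReal) (h : bandPreimage r P = bandPreimage r Q) :
    IsSquare ((P ^ 2 - C r ^ 2) * (Q ^ 2 - C r ^ 2)) := by
  refine isSquare_of_splits_of_eval_nonneg ((splits_sq_sub_sq_of_bandPreimage_subset hr hP).mul
    (splits_sq_sub_sq_of_bandPreimage_subset hr (h ▸ hP))) fun x ↦ ?_
  have hmem (R : ℝ[X]) : (x : ℂ) ∈ bandPreimage r R ↔ R.eval x ^ 2 - r ^ 2 ≤ 0 := by
    rw [ofReal_mem_bandPreimage, sub_nonpos, sq_le_sq, abs_of_nonneg hr]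
  have hsign : P.eval x ^ 2 - r ^ 2 ≤ 0 ↔ Q.eval x ^ 2 - r ^ 2 ≤ 0 := by rw [← hmem, ← hmem, h]
  simp only [eval_mul, eval_sub, eval_pow, eval_C]
  rcases le_or_gt (P.eval x ^ 2 - r ^ 2) 0 with hPx | hPx
  · exact mul_nonneg_of_nonpos_of_nonpos hPx (hsign.mp hPx)
  · exact mul_nonneg hPx.le (not_le.mp (hsign.not.mp hPx.not_ge)).le

lemma exists_C_eq_mul_sub_of_mul_eq_sq {K : Type*} [Field K] [NeZero (2 : K)] {P Q W : K[X]}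
    {s : K} (hP : P ≠ 0) (hQ : Q ≠ 0) (hdeg : P.natDegree = Q.natDegree)
    (hW : (P ^ 2 - C s) * (Q ^ 2 - C s) = W ^ 2) :
    ∃ k : K, P * Q - W = C k ∨ P * Q + W = C k := by
  by_contra! hne
  have hsub : (P * Q - W).natDegree ≠ 0 := fun h ↦ (hne _).1 (eq_C_of_natDegree_eq_zero h)
  have hadd : (P * Q + W).natDegree ≠ 0 := fun h ↦ (hne _).2 (eq_C_of_natDegree_eq_zero h)
  have hprod : (P * Q - W) * (P * Q + W) = C s * (P ^ 2 + Q ^ 2 - C s) := by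
    linear_combination hW
  have hprod_le : (C s * (P ^ 2 + Q ^ 2 - C s)).natDegree ≤ 2 * P.natDegree := by
    refine (natDegree_C_mul_le _ _).trans ?_
    rw [natDegree_sub_C]
    exact natDegree_add_le_of_degree_le (natDegree_pow_le) (hdeg ▸ natDegree_pow_le)
  have hsum : ((P * Q - W) + (P * Q + W)).natDegree = 2 * P.natDegree := by
    rw [show (P * Q - W) + (P * Q + W) = C 2 * (P * Q) by rw [C_ofNat]; ring,
      natDegree_C_mul two_ne_zero, natDegree_mul hP hQ, ← hdeg, two_mul]
  have hsum_le := natDegree_add_le (P * Q - W) (P * Q + W)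
  rw [← hprod, natDegree_mul (ne_zero_of_natDegree_gt (Nat.pos_of_ne_zero hsub))
    (ne_zero_of_natDegree_gt (Nat.pos_of_ne_zero hadd))] at hprod_le
  lia

lemma exists_sq_add_sq_eq_of_mul_eq_sq {K : Type*} [Field K] [NeZero (2 : K)] {P Q : K[X]}
    {s : K} (hP : P ≠ 0) (hQ : Q ≠ 0) (hdeg : P.natDegree = Q.natDegree)
    (h : IsSquare ((P ^ 2 - C s) * (Q ^ 2 - C s))) :
    ∃ k : K, C s * (P ^ 2 + Q ^ 2) = C (2 * k) * (P * Q) + C (s ^ 2 - k ^ 2) := by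
  obtain ⟨W, hW⟩ := h
  obtain ⟨k, hk⟩ := exists_C_eq_mul_sub_of_mul_eq_sq hP hQ hdeg (hW.trans (sq W).symm)
  refine ⟨k, ?_⟩
  simp only [C_mul, C_sub, C_pow, C_ofNat]
  rcases hk with hk | hk
  · rw [← hk]; linear_combination -hW
  · rw [← hk]; linear_combination -hW

lemma le_of_sq_add_sq_eq {P Q : ℝ[X]} {s k : ℝ} (hdeg : P.natDegree = Q.natDegree)
    (hpos : 0 < P.natDegree) (hP : 0 < P.leadingCoeff) (hQ : 0 < Q.leadingCoeff)
    (hk : C s * (P ^ 2 + Q ^ 2) = C (2 * k) * (P * Q) + C (s ^ 2 - k ^ 2)) (hs : 0 ≤ s) :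
    s ≤ k := by
  have hcoeff := congrArg (coeff · (P.natDegree + P.natDegree)) hk
  have hconst : (C (s ^ 2 - k ^ 2)).coeff (P.natDegree + P.natDegree) = 0 :=
    coeff_C_of_ne_zero (by lia)
  have hQQ : (Q * Q).coeff (P.natDegree + P.natDegree) = Q.leadingCoeff * Q.leadingCoeff := by
    rw [hdeg, coeff_mul_degree_add_degree]
  have hPQ : (P * Q).coeff (P.natDegree + P.natDegree) = P.leadingCoeff * Q.leadingCoeff := by
    nth_rw 2 [hdeg]
    rw [coeff_mul_degree_add_degree]
  simp only [sq P, sq Q, coeff_add, coeff_C_mul, hconst, hQQ, hPQ,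
    coeff_mul_degree_add_degree] at hcoeff
  have hprod : 0 < P.leadingCoeff * Q.leadingCoeff := mul_pos hP hQ
  refine le_of_mul_le_mul_right ?_ hprod
  nlinarith [mul_nonneg hs (sq_nonneg (P.leadingCoeff - Q.leadingCoeff))]

theorem eq_of_bandPreimage_eq {r : ℝ} (hr : 0 < r) {P Q : ℝ[X]}
    (hdeg : P.natDegree = Q.natDegree) (hpos : 0 < P.natDegree)
    (hP : 0 < P.leadingCoeff) (hQ : 0 < Q.leadingCoeff)
    (hreal : bandPreimage r P ⊆ Set.range Complex.ofReal)
    (h : bandPreimage r P = bandPreimage r Q) : P = Q := by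
  have hsquare := isSquare_mul_of_bandPreimage_eq hr.le hreal h
  rw [← C_pow] at hsquare
  obtain ⟨k, hk⟩ := exists_sq_add_sq_eq_of_mul_eq_sq (leadingCoeff_ne_zero.mp hP.ne')
    (leadingCoeff_ne_zero.mp hQ.ne') hdeg hsquare
  have hrk : r ^ 2 ≤ k := le_of_sq_add_sq_eq hdeg hpos hP hQ hk (sq_nonneg r)
  obtain ⟨x, hx⟩ : ∃ x : ℝ, P.eval x = 0 := by
    obtain ⟨z, hz⟩ := IsAlgClosed.exists_aeval_eq_zero ℂ P
      (natDegree_pos_iff_degree_pos.mp hpos).ne'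
    obtain ⟨x, rfl⟩ := hreal ⟨0, by simpa using hr.le, by simpa using hz⟩
    exact ⟨x, by simpa [aeval_ofReal_complex] using hz⟩
  have hkr : k = r ^ 2 := by
    have hkx := congrArg (eval x) hk
    simp only [eval_mul, eval_add, eval_pow, eval_C, hx] at hkx
    nlinarith [sq_nonneg (r * Q.eval x)]
  have hsq : C (r ^ 2) * (P - Q) ^ 2 = 0 := by
    rw [hkr, C_mul, C_ofNat, sub_self, C_0] at hk
    linear_combination hk
  have hC : C (r ^ 2) ≠ 0 := C_ne_zero.mpr (by positivity)
  exact sub_eq_zero.mp (pow_eq_zero_iff two_ne_zero |>.mp ((mul_eq_zero.mp hsq).resolve_left hC))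

end Polynomial

section Discriminant

open Polynomial

variable (a b : ℤ → ℝ)

lemma natDegree_lamMat_le (n : ℤ) (i j : Fin 2) : (lamMat a b n i j).natDegree ≤ 1 := by
  fin_cases i <;> fin_cases j <;> simp only [lamMat, Matrix.smul_apply, Matrix.of_apply,
    Matrix.cons_val', Matrix.cons_val_zero, Matrix.cons_val_one, Matrix.cons_val_fin_one,
    smul_eq_mul, Fin.zero_eta, Fin.mk_one] <;> compute_degree!

lemma natDegree_tMat_le (n : ℕ) (i j : Fin 2) : (tMat a b n i j).natDegree ≤ n := by
  induction n generalizing i j with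
  | zero => fin_cases i <;> fin_cases j <;> simp [tMat]
  | succ n ih =>
    rw [tMat, Matrix.mul_apply, add_comm n]
    exact natDegree_sum_le_of_forall_le _ _ fun k _ ↦
      natDegree_mul_le_of_le (natDegree_lamMat_le a b _ i k) (ih k j)

lemma coeff_tMat_succ (n : ℕ) (i j : Fin 2) :
    (tMat a b (n + 1) i j).coeff (n + 1) =
      if i = 0 then (a (n + 1))⁻¹ * (tMat a b n 0 j).coeff n else 0 := by
  have hcoeff (k : Fin 2) : (lamMat a b (n + 1) i k * tMat a b n k j).coeff (1 + n) =
      (lamMat a b (n + 1) i k).coeff 1 * (tMat a b n k j).coeff n :=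
    coeff_mul_add_eq_of_natDegree_le (natDegree_lamMat_le a b _ i k) (natDegree_tMat_le a b n k j)
  rw [tMat, Matrix.mul_apply, Fin.sum_univ_two, coeff_add, add_comm n, hcoeff, hcoeff]
  fin_cases i
  · simp [lamMat]
  · simp [lamMat, -map_pow]

lemma coeff_tMat_zero_zero (n : ℕ) :
    (tMat a b n 0 0).coeff n = ∏ i ∈ Finset.range n, (a (i + 1))⁻¹ := by
  induction n with
  | zero => simp [tMat]
  | succ n ih => rw [coeff_tMat_succ, if_pos rfl, ih, Finset.prod_range_succ_comm]

lemma natDegree_disc_le (p : ℕ) : (disc a b p).natDegree ≤ p := by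
  rw [disc, Matrix.trace_fin_two]
  exact natDegree_add_le_of_degree_le (natDegree_tMat_le a b p 0 0) (natDegree_tMat_le a b p 1 1)

lemma coeff_disc {p : ℕ} (hp : p ≠ 0) :
    (disc a b p).coeff p = ∏ i ∈ Finset.range p, (a (i + 1))⁻¹ := by
  obtain ⟨n, rfl⟩ := Nat.exists_eq_succ_of_ne_zero hp
  rw [disc, Matrix.trace_fin_two, coeff_add, coeff_tMat_zero_zero, coeff_tMat_succ,
    if_neg one_ne_zero, add_zero]

variable {a}

lemma coeff_disc_pos (ha : ∀ n, 0 < a n) {p : ℕ} (hp : p ≠ 0) : 0 < (disc a b p).coeff p :=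
  coeff_disc a b hp ▸ Finset.prod_pos fun _ _ ↦ inv_pos.mpr (ha _)

lemma natDegree_disc (ha : ∀ n, 0 < a n) {p : ℕ} (hp : p ≠ 0) : (disc a b p).natDegree = p :=
  natDegree_eq_of_le_of_coeff_ne_zero (natDegree_disc_le a b p) (coeff_disc_pos b ha hp).ne'

lemma leadingCoeff_disc_pos (ha : ∀ n, 0 < a n) {p : ℕ} (hp : p ≠ 0) :
    0 < (disc a b p).leadingCoeff := by
  rw [leadingCoeff, natDegree_disc b ha hp]
  exact coeff_disc_pos b ha hp

lemma det_lamMat {n : ℤ} (ha : a n ≠ 0) : (lamMat a b n).det = 1 := by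
  have hC : C (a n)⁻¹ * C (a n) = 1 := by rw [← C_mul, inv_mul_cancel₀ ha, C_1]
  simp only [lamMat, Matrix.det_fin_two, Matrix.smul_apply, Matrix.of_apply, Matrix.cons_val',
    Matrix.cons_val_zero, Matrix.cons_val_one, Matrix.cons_val_fin_one, smul_eq_mul, C_pow]
  linear_combination (C (a n)⁻¹ * C (a n) + 1) * hC

lemma det_tMat (ha : ∀ n, a n ≠ 0) (n : ℕ) : (tMat a b n).det = 1 := by
  induction n with
  | zero => simp [tMat]
  | succ n ih => rw [tMat, Matrix.det_mul, det_lamMat b (ha _), ih, one_mul]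

variable (a)

lemma tMat_succ' (n : ℕ) :
    tMat a b (n + 1) = tMat (fun k ↦ a (k + 1)) (fun k ↦ b (k + 1)) n * lamMat a b 1 := by
  induction n with
  | zero => simp [tMat]
  | succ n ih => rw [tMat, ih, ← mul_assoc, tMat]; simp [lamMat]

variable {a b} {p : ℕ}

lemma disc_add_one (ha : Function.Periodic a p) (hb : Function.Periodic b p) :
    disc (fun n ↦ a (n + 1)) (fun n ↦ b (n + 1)) p = disc a b p := by
  cases p with
  | zero => rfl
  | succ n =>
    have hlam : lamMat (fun k ↦ a (k + 1)) (fun k ↦ b (k + 1)) (n + 1) = lamMat a b 1 := by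
      have h1 : a (n + 1 + 1) = a 1 := by simpa [add_comm] using ha 1
      have h2 : b (n + 1 + 1) = b 1 := by simpa [add_comm] using hb 1
      simp only [lamMat, h1, h2]
    rw [disc, disc, tMat_succ' a b, Matrix.trace_mul_comm, tMat, hlam]

lemma disc_add_int (ha : Function.Periodic a p) (hb : Function.Periodic b p) (k : ℤ) :
    disc (fun n ↦ a (n + k)) (fun n ↦ b (n + k)) p = disc a b p := by
  have hstep : Function.Periodic (fun k : ℤ ↦ disc (fun n ↦ a (n + k)) (fun n ↦ b (n + k)) p) 1 :=
    fun k ↦ by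
      simpa only [add_right_comm, add_assoc] using disc_add_one (ha.add_const k) (hb.add_const k)
  simpa using hstep.int_mul_eq k

end Discriminant

section JacobiSolution

lemma add_adjugate_fin_two {R : Type*} [CommRing R] (M : Matrix (Fin 2) (Fin 2) R) :
    M + M.adjugate = M.trace • 1 := by
  rw [Matrix.adjugate_fin_two, Matrix.trace_fin_two]
  ext i j
  fin_cases i <;> fin_cases j <;> simp [add_comm]


open Polynomial
open scoped Matrix.Module

variable {A N : Type*} [Ring A] [AddCommGroup N] [Module ℝ N] [Module A N]
  {a b : ℤ → ℝ} {x : A} {U : ℤ → N}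

/-- `U` solves the Jacobi recurrence with spectral parameter `x`. Allowing `x` in an algebra acting
on the values of `U` covers both scalar solutions at a complex energy and the standard basis of
`ℓ²(ℤ)` with the Jacobi operator itself as `x`. -/
def IsJacobiSolution (a b : ℤ → ℝ) (x : A) (U : ℤ → N) : Prop :=
  ∀ n, x • U n = a (n - 1) • U (n - 1) + b n • U n + a n • U (n + 1)

/-- The column on which the transfer matrices act, with entries `U (n + 1)` and `a n • U n`. -/
def jacobiVec (a : ℤ → ℝ) (U : ℤ → N) (n : ℤ) : Fin 2 → N := ![U (n + 1), a n • U n]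

namespace IsJacobiSolution

lemma comp_add (hU : IsJacobiSolution a b x U) (k : ℤ) :
    IsJacobiSolution (fun n ↦ a (n + k)) (fun n ↦ b (n + k)) x (fun n ↦ U (n + k)) := fun n ↦ by
  simpa only [sub_add_eq_add_sub, add_right_comm] using hU (n + k)

lemma comp_add_of_periodic {k : ℤ} (ha : Function.Periodic a k) (hb : Function.Periodic b k)
    (hU : IsJacobiSolution a b x U) : IsJacobiSolution a b x (fun n ↦ U (n + k)) := by
  simpa only [ha _, hb _] using hU.comp_add k

variable [Algebra ℝ A] [IsScalarTower ℝ A N]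

lemma lamMat_smul_jacobiVec (ha : ∀ n, a n ≠ 0) (hU : IsJacobiSolution a b x U) (n : ℤ) :
    (aeval x).mapMatrix (lamMat a b (n + 1)) • jacobiVec a U n = jacobiVec a U (n + 1) := by
  have hrec : U (n + 1 + 1) =
      (a (n + 1))⁻¹ • (x • U (n + 1) - b (n + 1) • U (n + 1) - a n • U n) := by
    rw [hU (n + 1), add_sub_cancel_right, eq_inv_smul_iff₀ (ha _)]
    abel
  ext i
  fin_cases i
  · simp [lamMat, jacobiVec, Matrix.Module.smul_apply, mul_smul, add_smul, smul_add, hrec,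
      sub_eq_add_neg]
  · simp [lamMat, jacobiVec, Matrix.Module.smul_apply, ← map_mul, sq, ha]

lemma tMat_smul_jacobiVec (ha : ∀ n, a n ≠ 0) (hU : IsJacobiSolution a b x U) (n : ℕ) :
    (aeval x).mapMatrix (tMat a b n) • jacobiVec a U 0 = jacobiVec a U n := by
  induction n with
  | zero => simp [tMat]
  | succ n ih => rw [tMat, map_mul, mul_smul, ih, hU.lamMat_smul_jacobiVec ha, Nat.cast_succ]

lemma adjugate_tMat_smul_jacobiVec (ha : ∀ n, a n ≠ 0) {p : ℕ} (hpa : Function.Periodic a p)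
    (hpb : Function.Periodic b p) (hU : IsJacobiSolution a b x U) :
    (aeval x).mapMatrix (tMat a b p).adjugate • jacobiVec a U 0 = jacobiVec a U (-p) := by
  have hshift : jacobiVec a (fun n ↦ U (n + -p)) 0 = jacobiVec a U (-p) := by
    have hap : a 0 = a (-p) := hpa.neg_eq.symm
    simp [jacobiVec, hap, add_comm]
  have hback : (aeval x).mapMatrix (tMat a b p) • jacobiVec a U (-p) = jacobiVec a U 0 := by
    rw [← hshift, (hU.comp_add_of_periodic hpa.neg hpb.neg).tMat_smul_jacobiVec ha]
    simp [jacobiVec, add_right_comm, hpa.eq]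
  rw [← hback, ← mul_smul, ← map_mul, Matrix.adjugate_mul, det_tMat b ha, one_smul, map_one,
    one_smul]

lemma aeval_disc_smul_one (ha : ∀ n, a n ≠ 0) {p : ℕ} (hpa : Function.Periodic a p)
    (hpb : Function.Periodic b p) (hU : IsJacobiSolution a b x U) :
    aeval x (disc a b p) • U 1 = U (1 + p) + U (1 - p) := by
  have hvec : (aeval x).mapMatrix (disc a b p • (1 : Matrix (Fin 2) (Fin 2) ℝ[X])) •
      jacobiVec a U 0 = jacobiVec a U p + jacobiVec a U (-p) := by
    rw [disc, ← add_adjugate_fin_two, map_add, add_smul, hU.tMat_smul_jacobiVec ha,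
      hU.adjugate_tMat_smul_jacobiVec ha hpa hpb]
  simpa [jacobiVec, Matrix.Module.smul_apply, add_comm, sub_eq_neg_add] using congrFun hvec 0

theorem aeval_disc_smul (ha : ∀ n, a n ≠ 0) {p : ℕ} (hpa : Function.Periodic a p)
    (hpb : Function.Periodic b p) (hU : IsJacobiSolution a b x U) (n : ℤ) :
    aeval x (disc a b p) • U n = U (n + p) + U (n - p) := by
  have h := (hU.comp_add (n - 1)).aeval_disc_smul_one (fun _ ↦ ha _) (hpa.add_const _)
    (hpb.add_const _)
  rw [disc_add_int hpa hpb] at h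
  convert h using 3 <;> ring

end IsJacobiSolution

end JacobiSolution

section Floquet

lemma exists_two_sided_orbit {S : Type*} (A : ℤ → S ≃ S) (s₀ : S) :
    ∃ s : ℤ → S, s 0 = s₀ ∧ ∀ n, s (n + 1) = A n (s n) := by
  let s (n : ℤ) : S := n.inductionOn' (motive := fun _ ↦ S) 0 s₀ (fun k _ ↦ A k)
    (fun k _ ↦ (A (k - 1)).symm)
  refine ⟨s, Int.inductionOn'_self .., fun n ↦ ?_⟩
  rcases le_or_gt 0 n with hn | hn
  · exact Int.inductionOn'_add_one hn
  · have hback : s (n + 1 - 1) = (A (n + 1 - 1)).symm (s (n + 1)) :=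
      Int.inductionOn'_sub_one (by lia)
    rw [add_sub_cancel_right] at hback
    rw [hback, Equiv.apply_symm_apply]

lemma exists_isJacobiSolution {A N : Type*} [Ring A] [AddCommGroup N] [Module ℝ N] [Module A N]
    {a : ℤ → ℝ} (ha : ∀ n, a n ≠ 0) (b : ℤ → ℝ) (x : A) (v₀ v₁ : N) :
    ∃ U, IsJacobiSolution a b x U ∧ U 0 = v₀ ∧ U 1 = v₁ := by
  let step (n : ℤ) : N × N ≃ N × N :=
    { toFun := fun v ↦ (v.2, (a (n + 1))⁻¹ • (x • v.2 - b (n + 1) • v.2 - a n • v.1))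
      invFun := fun v ↦ ((a n)⁻¹ • (x • v.1 - b (n + 1) • v.1 - a (n + 1) • v.2), v.1)
      left_inv := fun v ↦ by simp [ha]
      right_inv := fun v ↦ by simp [ha] }
  obtain ⟨s, hs₀, hs⟩ := exists_two_sided_orbit step (v₀, v₁)
  have hsnd (n : ℤ) : (s (n + 1)).1 = (s n).2 := congrArg Prod.fst (hs n)
  refine ⟨fun n ↦ (s n).1, fun n ↦ ?_, congrArg Prod.fst hs₀, ?_⟩
  · have hrec := congrArg Prod.snd (hs (n - 1))
    simp only [step, Equiv.coe_fn_mk, sub_add_cancel, ← hsnd] at hrec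
    beta_reduce
    rw [hrec, smul_inv_smul₀ (ha n)]
    abel
  · exact (hsnd 0).trans (congrArg Prod.snd hs₀)

lemma exists_norm_eq_one_add_conj_eq {t : ℝ} (ht : |t| ≤ 2) :
    ∃ l : ℂ, ‖l‖ = 1 ∧ l + conj l = t := by
  obtain ⟨hlower, hupper⟩ := abs_le.mp ht
  refine ⟨Complex.exp (Real.arccos (t / 2) * Complex.I), Complex.norm_exp_ofReal_mul_I _, ?_⟩
  rw [Complex.add_conj, Complex.exp_ofReal_mul_I_re, Real.cos_arccos (by linarith) (by linarith),
    mul_div_cancel₀ t two_ne_zero]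

variable {a b : ℤ → ℝ} {p : ℕ}

/- The recurrence `U (n + 2p) = t U (n + p) - U n` factors through the unimodular roots `l` and
`conj l` of its characteristic polynomial. -/
theorem exists_isJacobiSolution_norm_periodic (ha : ∀ n, a n ≠ 0) (hpa : Function.Periodic a p)
    (hpb : Function.Periodic b p) {z : ℂ} (hz : z ∈ bandPreimage 2 (disc a b p)) :
    ∃ w : ℤ → ℂ, w ≠ 0 ∧ IsJacobiSolution a b z w ∧ Function.Periodic (fun n ↦ ‖w n‖) p := by
  obtain ⟨t, ht, hΔ⟩ := hz
  obtain ⟨l, hl, hlt⟩ := exists_norm_eq_one_add_conj_eq ht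
  have hconj : l * conj l = 1 := by rw [Complex.mul_conj', hl]; norm_num
  obtain ⟨U, hU, -, hU₁⟩ := exists_isJacobiSolution ha b z (0 : ℂ) 1
  have hshift := hU.comp_add_of_periodic hpa hpb
  set V : ℤ → ℂ := fun n ↦ U (n + p) - l * U n
  have hV : IsJacobiSolution a b z V := fun n ↦ by
    have hn := hU n
    have hnp := hshift n
    simp only [smul_eq_mul, Complex.real_smul] at hn hnp ⊢
    linear_combination hnp - l * hn
  have hVp (n : ℤ) : V (n + p) = conj l * V n := by
    have hfloquet := hU.aeval_disc_smul ha hpa hpb (n + p)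
    rw [hΔ, ← hlt, smul_eq_mul, add_sub_cancel_right] at hfloquet
    linear_combination -hfloquet + U n * hconj
  by_cases hV0 : V = 0
  · refine ⟨U, fun h ↦ by simp [h] at hU₁, hU, fun n ↦ ?_⟩
    have hUp : U (n + p) = l * U n := sub_eq_zero.mp (congrFun hV0 n)
    simp [hUp, hl]
  · exact ⟨V, hV0, hV, fun n ↦ by simp [hVp, hl]⟩

end Floquet

section Periodic

lemma exists_norm_le_of_periodic {E : Type*} [SeminormedAddCommGroup E] {f : ℤ → E} {p : ℕ}
    (hp : 0 < p) (hf : Function.Periodic f p) : ∃ M, ∀ n, ‖f n‖ ≤ M := by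
  obtain ⟨M, hM⟩ := ((Set.finite_Ioc (0 : ℤ) (0 + p)).image f).isBounded.exists_norm_le
  rw [hf.image_Ioc (by exact_mod_cast hp)] at hM
  exact ⟨M, fun n ↦ hM _ ⟨n, rfl⟩⟩

lemma not_summable_of_periodic {E : Type*} [AddCommGroup E] [TopologicalSpace E]
    [IsTopologicalAddGroup E] [T2Space E] {f : ℤ → E} {p : ℕ} (hp : 0 < p)
    (hf : Function.Periodic f p) (hf₀ : f ≠ 0) : ¬ Summable fun n : ℕ ↦ f n := by
  intro hsum
  obtain ⟨m, hm⟩ := Function.ne_iff.mp hf₀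
  have hlim : Filter.Tendsto f Filter.atTop (nhds 0) := by
    rw [← Nat.map_cast_int_atTop, Filter.tendsto_map'_iff]
    exact hsum.tendsto_atTop_zero
  have hsubseq : Filter.Tendsto (fun k : ℤ ↦ m + k * p) Filter.atTop Filter.atTop :=
    Filter.tendsto_atTop_add_const_left _ _
      (Filter.tendsto_id.atTop_mul_const' (Nat.cast_pos.mpr hp))
  have hconst : f ∘ (fun k : ℤ ↦ m + k * p) = fun _ ↦ f m := funext fun k ↦ hf.int_mul k m
  exact hm (tendsto_nhds_unique tendsto_const_nhds (hconst ▸ hlim.comp hsubseq))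

end Periodic

section JacobiOperator

open Polynomial

variable {H : Type*} [NormedAddCommGroup H] [InnerProductSpace ℂ H]

lemma exists_norm_le_mul_of_notMem_spectrum {𝕜 E : Type*} [NontriviallyNormedField 𝕜]
    [NormedAddCommGroup E] [NormedSpace 𝕜 E] {T : E →L[𝕜] E} {z : 𝕜} (hz : z ∉ spectrum 𝕜 T) :
    ∃ C, 0 ≤ C ∧ ∀ u, ‖u‖ ≤ C * ‖T u - z • u‖ := by
  obtain ⟨R, hR⟩ := (spectrum.notMem_iff.mp hz).exists_left_inv
  refine ⟨‖R‖, norm_nonneg R, fun u ↦ ?_⟩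
  have hu : R (z • u - T u) = u := by
    simpa [Algebra.algebraMap_eq_smul_one] using congrArg (fun S : E →L[𝕜] E ↦ S u) hR
  calc ‖u‖ = ‖R (z • u - T u)‖ := by rw [hu]
    _ ≤ ‖R‖ * ‖T u - z • u‖ := norm_sub_rev (T u) _ ▸ R.le_opNorm _

/-- The boundary term in the discrete Green identity for two solutions of a Jacobi recurrence, the
second of which may be vector-valued. -/
def casoratian (a : ℤ → ℝ) (w : ℤ → ℂ) (U : ℤ → H) (n : ℤ) : H :=
  a (n - 1) • (w (n - 1) • U n - w n • U (n - 1))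

lemma norm_casoratian_le {a : ℤ → ℝ} {w : ℤ → ℂ} {U : ℤ → H} {M B : ℝ} (ha : ∀ n, ‖a n‖ ≤ M)
    (hw : ∀ n, ‖w n‖ ≤ B) (hU : ∀ n, ‖U n‖ = 1) (n : ℤ) :
    ‖casoratian a w U n‖ ≤ M * (B + B) := by
  have hterm (i j : ℤ) : ‖w i • U j‖ ≤ B := by simpa [norm_smul, hU] using hw i
  have hM : 0 ≤ M := (norm_nonneg _).trans (ha 0)
  rw [casoratian, norm_smul]
  gcongr
  exacts [ha _, norm_sub_le_of_le (hterm _ _) (hterm _ _)]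

variable {a b : ℤ → ℝ} {T : H →L[ℂ] H}

lemma IsJacobiSolution.apply_sum_sub_smul_sum {w : ℤ → ℂ} {U : ℤ → H} {z : ℂ}
    (hw : IsJacobiSolution a b z w) (hU : IsJacobiSolution a b T U) (N : ℕ) :
    T (∑ n ∈ Finset.range N, w n • U n) - z • ∑ n ∈ Finset.range N, w n • U n =
      casoratian a w U N - casoratian a w U 0 := by
  have hgreen (n : ℤ) :
      T (w n • U n) - z • w n • U n = casoratian a w U (n + 1) - casoratian a w U n := by
    have hTn : T (U n) = _ := hU n
    have hzn : z * w n = _ := hw n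
    rw [map_smul, hTn, smul_smul, hzn]
    simp only [casoratian, add_sub_cancel_right, ← Complex.coe_smul, smul_eq_mul]
    module
  rw [map_sum, Finset.smul_sum, ← Finset.sum_sub_distrib]
  simpa only [hgreen, Nat.cast_succ, Nat.cast_zero] using
    Finset.sum_range_sub (fun n : ℕ ↦ casoratian a w U n) N

theorem IsJacobiSolution.mem_spectrum {e : ℤ → H} (hT : IsJacobiSolution a b T e)
    (he : Orthonormal ℂ e) {M : ℝ} (ha : ∀ n, ‖a n‖ ≤ M) {z : ℂ} {w : ℤ → ℂ}
    (hw : IsJacobiSolution a b z w) {B : ℝ} (hwB : ∀ n, ‖w n‖ ≤ B)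
    (hsum : ¬ Summable fun n : ℕ ↦ ‖w n‖ ^ 2) : z ∈ spectrum ℂ T := by
  by_contra hz
  obtain ⟨C, hC, hbound⟩ := exists_norm_le_mul_of_notMem_spectrum hz
  have hcas := norm_casoratian_le ha hwB he.1
  refine hsum (summable_of_sum_range_le (c := (C * (M * (B + B) + M * (B + B))) ^ 2)
    (fun _ ↦ sq_nonneg _) fun N ↦ ?_)
  set u := ∑ n ∈ Finset.range N, w n • e n
  have hnorm : ‖u‖ ^ 2 = ∑ n ∈ Finset.range N, ‖w n‖ ^ 2 := by
    simpa using (he.comp _ Nat.cast_injective).orthogonalFamily.norm_sum (fun n : ℕ ↦ w n)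
      (Finset.range N)
  rw [← hnorm]
  gcongr
  calc ‖u‖ ≤ C * ‖T u - z • u‖ := hbound u
    _ ≤ C * (M * (B + B) + M * (B + B)) := by
      rw [hw.apply_sum_sub_smul_sum hT]
      gcongr
      exact norm_sub_le_of_le (hcas N) (hcas 0)

variable {e : HilbertBasis ℤ ℂ H} {p : ℕ}

theorem IsJacobiSolution.bandPreimage_subset_spectrum (hT : IsJacobiSolution a b T e) (hp : 0 < p)
    (ha : ∀ n, a n ≠ 0) (hpa : Function.Periodic a p) (hpb : Function.Periodic b p) :
    bandPreimage 2 (disc a b p) ⊆ spectrum ℂ T := by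
  intro z hz
  obtain ⟨w, hw₀, hw, hwp⟩ := exists_isJacobiSolution_norm_periodic ha hpa hpb hz
  obtain ⟨M, hM⟩ := exists_norm_le_of_periodic hp hpa
  obtain ⟨B, hB⟩ := exists_norm_le_of_periodic hp hwp
  refine hT.mem_spectrum e.orthonormal hM hw (by simpa using hB)
    (not_summable_of_periodic hp (hwp.comp (· ^ 2)) fun h ↦ hw₀ (funext fun n ↦ ?_))
  simpa using congrFun h n

variable [CompleteSpace H]

lemma ext_hilbertBasis {ι 𝕜 E F : Type*} [RCLike 𝕜] [NormedAddCommGroup E] [InnerProductSpace 𝕜 E]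
    [NormedAddCommGroup F] [NormedSpace 𝕜 F] (e : HilbertBasis ι 𝕜 E) {S T : E →L[𝕜] F}
    (h : ∀ i, S (e i) = T (e i)) : S = T :=
  ContinuousLinearMap.ext_on (Submodule.dense_iff_topologicalClosure_eq_top.mpr e.dense_span)
    (Set.forall_mem_range.mpr h)

lemma IsJacobiSolution.isSelfAdjoint (hT : IsJacobiSolution a b T e) : IsSelfAdjoint T := by
  rw [ContinuousLinearMap.isSelfAdjoint_iff']
  refine ext_hilbertBasis e fun n ↦ e.repr.injective (lp.ext (funext fun m ↦ ?_))
  have hTm : T (e m) = _ := hT m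
  have hTn : T (e n) = _ := hT n
  rw [e.repr_apply_apply, e.repr_apply_apply, ContinuousLinearMap.adjoint_inner_right, hTm, hTn]
  simp only [← Complex.coe_smul, inner_add_left, inner_add_right, inner_smul_left,
    inner_smul_right, orthonormal_iff_ite.mp e.orthonormal, Complex.conj_ofReal]
  grind

lemma IsJacobiSolution.spectrum_subset_range_ofReal (hT : IsJacobiSolution a b T e) :
    spectrum ℂ T ⊆ Set.range Complex.ofReal :=
  fun z hz ↦ ⟨z.re, (hT.isSelfAdjoint.mem_spectrum_eq_re hz).symm⟩

lemma exists_linearIsometry_shift (e : HilbertBasis ℤ ℂ H) (k : ℤ) :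
    ∃ S : H →ₗᵢ[ℂ] H, ∀ n, S (e n) = e (n + k) := by
  have horth : Orthonormal ℂ fun n ↦ e (n + k) := e.orthonormal.comp _ (add_left_injective k)
  exact ⟨horth.orthogonalFamily.linearIsometry.comp e.repr.toLinearIsometry, fun n ↦ by
    simp [e.repr_self, OrthogonalFamily.linearIsometry_apply_single]⟩

lemma IsJacobiSolution.norm_aeval_disc_le_two (hT : IsJacobiSolution a b T e)
    (ha : ∀ n, a n ≠ 0) (hpa : Function.Periodic a p) (hpb : Function.Periodic b p) :
    ‖aeval T (disc a b p)‖ ≤ 2 := by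
  have : IsScalarTower ℝ (H →L[ℂ] H) H := ⟨fun _ _ _ ↦ rfl⟩
  obtain ⟨S, hS⟩ := exists_linearIsometry_shift e p
  obtain ⟨S', hS'⟩ := exists_linearIsometry_shift e (-p)
  have hsum : aeval T (disc a b p) = S.toContinuousLinearMap + S'.toContinuousLinearMap :=
    ext_hilbertBasis e fun n ↦ by
      simpa [hS, hS', sub_eq_add_neg] using hT.aeval_disc_smul ha hpa hpb n
  rw [hsum, ← one_add_one_eq_two]
  exact norm_add_le_of_le S.norm_toContinuousLinearMap_le S'.norm_toContinuousLinearMap_le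

theorem IsJacobiSolution.spectrum_subset_bandPreimage (hT : IsJacobiSolution a b T e)
    (ha : ∀ n, a n ≠ 0) (hpa : Function.Periodic a p) (hpb : Function.Periodic b p) :
    spectrum ℂ T ⊆ bandPreimage 2 (disc a b p) := by
  intro z hz
  obtain ⟨x, rfl⟩ := hT.spectrum_subset_range_ofReal hz
  have hmem : (((disc a b p).eval x : ℝ) : ℂ) ∈ spectrum ℂ (aeval T (disc a b p)) := by
    simpa only [eval_map_algebraMap, aeval_map_algebraMap, aeval_ofReal_complex] using
      spectrum.subset_polynomial_aeval T ((disc a b p).map (algebraMap ℝ ℂ)) ⟨(x : ℂ), hz, rfl⟩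
  rw [ofReal_mem_bandPreimage]
  have : Nontrivial H := ⟨⟨e 0, 0, e.orthonormal.ne_zero 0⟩⟩
  simpa using (spectrum.norm_le_norm_of_mem hmem).trans (hT.norm_aeval_disc_le_two ha hpa hpb)

theorem IsJacobiSolution.spectrum_eq_bandPreimage (hT : IsJacobiSolution a b T e) (hp : 0 < p)
    (ha : ∀ n, a n ≠ 0) (hpa : Function.Periodic a p) (hpb : Function.Periodic b p) :
    spectrum ℂ T = bandPreimage 2 (disc a b p) :=
  (hT.spectrum_subset_bandPreimage ha hpa hpb).antisymm
    (hT.bandPreimage_subset_spectrum hp ha hpa hpb)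

theorem statement5_general {H' : Type*} [NormedAddCommGroup H'] [InnerProductSpace ℂ H']
    [CompleteSpace H'] {e' : HilbertBasis ℤ ℂ H'} {T' : H' →L[ℂ] H'} {a' b' : ℤ → ℝ} (hp : 0 < p)
    (hpos : ∀ n, 0 < a n) (hpera : Function.Periodic a p) (hperb : Function.Periodic b p)
    (hpos' : ∀ n, 0 < a' n) (hpera' : Function.Periodic a' p) (hperb' : Function.Periodic b' p)
    (hT : IsJacobiSolution a b T e) (hT' : IsJacobiSolution a' b' T' e') :
    spectrum ℂ T = spectrum ℂ T' ↔ disc a b p = disc a' b' p := by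
  have hσ := hT.spectrum_eq_bandPreimage hp (fun n ↦ (hpos n).ne') hpera hperb
  have hσ' := hT'.spectrum_eq_bandPreimage hp (fun n ↦ (hpos' n).ne') hpera' hperb'
  have hdeg := natDegree_disc b hpos hp.ne'
  have hdeg' := natDegree_disc b' hpos' hp.ne'
  have hreal := hT.spectrum_subset_range_ofReal
  rw [hσ] at hreal
  rw [hσ, hσ']
  exact ⟨eq_of_bandPreimage_eq two_pos (hdeg.trans hdeg'.symm) (hdeg.symm ▸ hp)
    (leadingCoeff_disc_pos b hpos hp.ne') (leadingCoeff_disc_pos b' hpos' hp.ne') hreal,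
    fun h ↦ by rw [h]⟩

end JacobiOperator

section StandardBasis

/-- The standard orthonormal basis of `ℓ²(ℤ)`. -/
def stdBasis : HilbertBasis ℤ ℂ HZ := .ofRepr (.refl ℂ HZ)

lemma stdBasis_apply (n m : ℤ) : stdBasis n m = if m = n then 1 else 0 := by
  change stdBasis.repr (stdBasis n) m = _
  rw [HilbertBasis.repr_self, lp.single_apply, Pi.single_apply]

lemma isJacobiSolution_stdBasis {a b : ℤ → ℝ} {J : HZ →L[ℂ] HZ}
    (hJ : ∀ (u : HZ) (n : ℤ),
      (J u) n = (a (n - 1) : ℂ) * u (n - 1) + (b n : ℂ) * u n + (a n : ℂ) * u (n + 1)) :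
    IsJacobiSolution a b J stdBasis := by
  refine fun n ↦ lp.ext (funext fun m ↦ ?_)
  change J (stdBasis n) m = (a (n - 1) * stdBasis (n - 1) m + b n * stdBasis n m +
    a n * stdBasis (n + 1) m : ℂ)
  simp only [hJ, stdBasis_apply]
  grind

end StandardBasis

/-- two two-sided `p`-periodic Jacobi operators have the same
spectrum iff they have the same discriminant. -/
theorem statement5 (p : ℕ) (hp : 1 ≤ p)
    (a b : ℤ → ℝ) (hpos : ∀ n, 0 < a n)
    (hpera : Function.Periodic a (p : ℤ)) (hperb : Function.Periodic b (p : ℤ))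
    (a' b' : ℤ → ℝ) (hpos' : ∀ n, 0 < a' n)
    (hpera' : Function.Periodic a' (p : ℤ)) (hperb' : Function.Periodic b' (p : ℤ))
    (J : HZ →L[ℂ] HZ)
    (hJ : ∀ (u : HZ) (n : ℤ),
      (J u) n = (a (n - 1) : ℂ) * u (n - 1) + (b n : ℂ) * u n + (a n : ℂ) * u (n + 1))
    (J' : HZ →L[ℂ] HZ)
    (hJ' : ∀ (u : HZ) (n : ℤ),
      (J' u) n = (a' (n - 1) : ℂ) * u (n - 1) + (b' n : ℂ) * u n + (a' n : ℂ) * u (n + 1)) :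
    spectrum ℂ J = spectrum ℂ J' ↔ disc a b p = disc a' b' p := by
  exact statement5_general hp hpos hpera hperb hpos' hpera' hperb' (isJacobiSolution_stdBasis hJ)
    (isJacobiSolution_stdBasis hJ')
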